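/- arXiv:1909.06648 — 4 statements merged into one kernel-verified Lean document; each statement's English description precedes it below -/
import Mathlib

section
/- Let (a,b) ∈ [0,1]² and let c satisfy 0 ≤ c ≤ min{a,b,1−a,1−b}, and set d₁ = max{a+b−1,0} + c. Then 12∫₀¹∫₀¹ C̲^{(a,b)}_c(u,v) du dv − 3 = 6d₁(1−a−b+d₁)(1−a−b+2d₁) − 1; equivalently, Spearman's rho of C̲^{(a,b)}_c equals 6d₁(1−a−b+d₁)(1−a−b+2d₁) − 1. -/
open Set MeasureTheory intervalIntegral

/-- A bivariate copula: boundary conditions plus the 2-increasing property. -/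
def IsCopula (C : ℝ → ℝ → ℝ) : Prop :=
  (∀ u ∈ Set.Icc (0:ℝ) 1, C u 0 = 0 ∧ C 0 u = 0 ∧ C u 1 = u ∧ C 1 u = u) ∧
  ∀ u₁ u₂ v₁ v₂ : ℝ, 0 ≤ u₁ → u₁ ≤ u₂ → u₂ ≤ 1 → 0 ≤ v₁ → v₁ ≤ v₂ → v₂ ≤ 1 →
    0 ≤ C u₂ v₂ - C u₂ v₁ - C u₁ v₂ + C u₁ v₁

/-- The lower bound function C̲^{(a,b)}_c. -/
noncomputable def lowerC (a b c : ℝ) : ℝ → ℝ → ℝ := fun u v =>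
  max (max (u + v - 1) 0)
    (min (min (max (a + b - 1) 0 + c) (u - a + (max (a + b - 1) 0 + c)))
      (min (v - b + (max (a + b - 1) 0 + c)) (u + v - a - b + (max (a + b - 1) 0 + c))))

/-- The upper bound function C̄^{(a,b)}_c. -/
noncomputable def upperC (a b c : ℝ) : ℝ → ℝ → ℝ := fun u v =>
  min (min u v)
    (max (max (min a b - c) (u - b + (min a b - c)))
      (max (v - a + (min a b - c)) (u + v - a - b + (min a b - c))))

/-- Spearman's rho of a copula. -/
noncomputable def spearmanRho (C : ℝ → ℝ → ℝ) : ℝ :=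
  12 * (∫ u in (0:ℝ)..1, ∫ v in (0:ℝ)..1, C u v) - 3

/-- Spearman's footrule of a copula. -/
noncomputable def spearmanFootrule (C : ℝ → ℝ → ℝ) : ℝ :=
  6 * (∫ u in (0:ℝ)..1, C u u) - 2

/-- Gini's gamma of a copula. -/
noncomputable def giniGamma (C : ℝ → ℝ → ℝ) : ℝ :=
  4 * (∫ u in (0:ℝ)..1, (C u u + C u (1 - u))) - 2

/-- Blomqvist's beta of a copula. -/
noncomputable def blomqvistBeta (C : ℝ → ℝ → ℝ) : ℝ :=
  4 * C (1/2) (1/2) - 1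

/-!
Write `W u v = max (u + v - 1) 0`, `d = d₁` and `e = 1 - a - b + d`. The bound `lowerC` exceeds `W`
only over a square of side `d + e` with lower left corner `(a - d, b - d)`. At abscissa
`a - d + x`, the section of `lowerC - W` over this square is the difference of two translates of a
ramp of height `k = min x d`, the distance between them being `w = min e (d + e - x)`, so its area
is `k * w`. As `x` runs through `[0, d + e]`, the product `k * w` is a tent of height `d * e`;
hence `lowerC - W` has integral `d * e * (d + e) / 2`, to be added to the integral `1 / 6` of `W`.
-/

/-- The pointwise lower bound of the copulas `C` with `C a b = d`, in the form which exhibits it as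
the lower Fréchet–Hoeffding bound joined with the 1-Lipschitz estimate from the point `(a, b)`. -/
noncomputable def pointLowerBound (a b d u v : ℝ) : ℝ :=
  max (max (u + v - 1) 0) (d - max (a - u) 0 - max (b - v) 0)

lemma lowerC_eq_pointLowerBound (a b c : ℝ) :
    lowerC a b c = pointLowerBound a b (max (a + b - 1) 0 + c) := by
  funext u v
  simp only [lowerC, pointLowerBound]
  grind

lemma integral_max_sub_zero {p q t : ℝ} (hp : p ≤ t) (hq : t ≤ q) :
    ∫ x in p..q, max (x - t) 0 = (q - t) ^ 2 / 2 := by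
  have hcont : Continuous fun x : ℝ => max (x - t) 0 := by fun_prop
  have hleft : ∫ x in p..t, max (x - t) 0 = ∫ _ in p..t, (0 : ℝ) :=
    integral_congr fun x hx => max_eq_right (by linarith [(uIcc_of_le hp ▸ hx).2])
  have hright : ∫ x in t..q, max (x - t) 0 = ∫ x in t..q, (x - t) :=
    integral_congr fun x hx => max_eq_left (by linarith [(uIcc_of_le hq ▸ hx).1])
  rw [← integral_add_adjacent_intervals (hcont.intervalIntegrable p t)
    (hcont.intervalIntegrable t q), hleft, hright, intervalIntegral.integral_zero, zero_add,
    integral_comp_sub_right (fun x => x), sub_self, integral_id]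
  ring

lemma integral_ramp_combination {p q r s t : ℝ} (hr : r ∈ Icc p q) (hs : s ∈ Icc p q)
    (ht : t ∈ Icc p q) (A B C : ℝ) :
    ∫ x in p..q, (A * max (x - r) 0 - B * max (x - s) 0 + C * max (x - t) 0)
      = (A * (q - r) ^ 2 - B * (q - s) ^ 2 + C * (q - t) ^ 2) / 2 := by
  have hramp (D y : ℝ) : IntervalIntegrable (fun x => D * max (x - y) 0) volume p q :=
    Continuous.intervalIntegrable (by fun_prop) p q
  rw [integral_add ((hramp A r).sub (hramp B s)) (hramp C t), integral_sub (hramp A r) (hramp B s)]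
  simp only [intervalIntegral.integral_const_mul]
  rw [integral_max_sub_zero hr.1 hr.2, integral_max_sub_zero hs.1 hs.2,
    integral_max_sub_zero ht.1 ht.2]
  ring

lemma integral_max_ramp_min {p q α β k : ℝ} (hα : p ≤ α) (hβ : β ∈ Icc p q) (hk : β + k ≤ q) :
    ∫ v in p..q, max (max (v - β) 0) (min (v - α) k)
      = (q - β) ^ 2 / 2 + max k 0 * max (β - α) 0 := by
  by_cases h : 0 ≤ k ∧ α ≤ β
  · obtain ⟨hk0, hαβ⟩ := h
    have hramps (v : ℝ) : max (max (v - β) 0) (min (v - α) k)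
        = 1 * max (v - α) 0 - 1 * max (v - (α + k)) 0 + 1 * max (v - (β + k)) 0 := by
      grind
    simp_rw [hramps]
    rw [integral_ramp_combination ⟨hα, hαβ.trans hβ.2⟩ ⟨by linarith, by linarith⟩
      ⟨by linarith [hβ.1], hk⟩, max_eq_left hk0, max_eq_left (sub_nonneg.2 hαβ)]
    ring
  · have hramp (v : ℝ) : max (max (v - β) 0) (min (v - α) k) = max (v - β) 0 := by grind
    have hzero : max k 0 * max (β - α) 0 = 0 := by
      rw [mul_eq_zero, max_eq_right_iff, max_eq_right_iff]
      grind
    simp_rw [hramp]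
    rw [integral_max_sub_zero hβ.1 hβ.2, hzero, add_zero]

lemma max_min_mul_max_min_eq_ramps {d e : ℝ} (hd : 0 ≤ d) (he : 0 ≤ e) (x : ℝ) :
    max (min x d) 0 * max (min e (d + e - x)) 0
      = e * max x 0 - (d + e) * max (x - d) 0 + d * max (x - (d + e)) 0 := by
  rcases le_total x d with hxd | hdx
  · rw [min_eq_left hxd, min_eq_left (by linarith), max_eq_left he,
      max_eq_right (sub_nonpos.2 hxd), max_eq_right (by linarith : x - (d + e) ≤ 0)]
    ring
  · have hflip : max (x - (d + e)) 0 = max (d + e - x) 0 + (x - (d + e)) := by grind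
    rw [min_eq_right hdx, min_eq_right (by linarith), max_eq_left hd,
      max_eq_left (hd.trans hdx), max_eq_left (sub_nonneg.2 hdx), hflip]
    ring

lemma integral_tent {p q r d e : ℝ} (hr : p ≤ r) (hd : 0 ≤ d) (he : 0 ≤ e)
    (hq : r + d + e ≤ q) :
    ∫ u in p..q, max (min (u - r) d) 0 * max (min e (d + e - (u - r))) 0
      = d * e * (d + e) / 2 := by
  simp_rw [max_min_mul_max_min_eq_ramps hd he, sub_sub]
  rw [integral_ramp_combination ⟨hr, by linarith⟩ ⟨by linarith, by linarith⟩
    ⟨by linarith, by linarith⟩]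
  ring

section PointLowerBound

variable {a b d : ℝ}

lemma integral_pointLowerBound_section (hda : d ≤ a) (hdb : d ≤ b) {u : ℝ} (hu : u ∈ Icc 0 1) :
    ∫ v in (0:ℝ)..1, pointLowerBound a b d u v
      = u ^ 2 / 2 + max (min (u - (a - d)) d) 0
          * max (min (1 - a - b + d) (d + (1 - a - b + d) - (u - (a - d)))) 0 := by
  obtain ⟨hu0, hu1⟩ := hu
  set k := min (u - (a - d)) d
  have hkd : k ≤ d := min_le_right _ _
  have hku : k ≤ u := (min_le_left _ _).trans (by linarith)
  have hsection (v : ℝ) : pointLowerBound a b d u v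
      = max (max (v - (1 - u)) 0) (min (v - (b - k)) k) := by
    simp only [pointLowerBound]
    grind
  have hwidth : 1 - u - (b - k) = min (1 - a - b + d) (d + (1 - a - b + d) - (u - (a - d))) := by
    grind
  simp_rw [hsection]
  rw [integral_max_ramp_min (by linarith) ⟨by linarith, by linarith⟩ (by linarith), hwidth,
    sub_sub_cancel]

lemma integral_pointLowerBound (hd : 0 ≤ d) (hda : d ≤ a) (hdb : d ≤ b) (hab : a + b - 1 ≤ d) :
    ∫ u in (0:ℝ)..1, ∫ v in (0:ℝ)..1, pointLowerBound a b d u v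
      = 1 / 6 + d * (1 - a - b + d) * (1 - a - b + 2 * d) / 2 := by
  have hsections : ∫ u in (0:ℝ)..1, ∫ v in (0:ℝ)..1, pointLowerBound a b d u v
      = ∫ u in (0:ℝ)..1, (u ^ 2 / 2 + max (min (u - (a - d)) d) 0
          * max (min (1 - a - b + d) (d + (1 - a - b + d) - (u - (a - d)))) 0) :=
    integral_congr fun u hu =>
      integral_pointLowerBound_section hda hdb (uIcc_of_le (zero_le_one' ℝ) ▸ hu)
  have hsq : ∫ u in (0:ℝ)..1, u ^ 2 / 2 = 1 / 6 := by
    rw [intervalIntegral.integral_div, integral_pow]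
    norm_num
  rw [hsections, integral_add (Continuous.intervalIntegrable (by fun_prop) _ _)
    (Continuous.intervalIntegrable (by fun_prop) _ _), hsq,
    integral_tent (by linarith) hd (by linarith) (by linarith)]
  ring

end PointLowerBound

theorem rho_lowerC (a b c d₁ : ℝ) (ha : a ∈ Set.Icc (0:ℝ) 1) (hb : b ∈ Set.Icc (0:ℝ) 1)
    (hc0 : 0 ≤ c) (hc : c ≤ min (min a b) (min (1 - a) (1 - b)))
    (hd : d₁ = max (a + b - 1) 0 + c) :
    12 * (∫ u in (0:ℝ)..1, ∫ v in (0:ℝ)..1, lowerC a b c u v) - 3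
      = 6 * d₁ * (1 - a - b + d₁) * (1 - a - b + 2 * d₁) - 1 ∧
    spearmanRho (lowerC a b c) = 6 * d₁ * (1 - a - b + d₁) * (1 - a - b + 2 * d₁) - 1 := by
  simp only [le_min_iff] at hc
  obtain ⟨⟨hca, hcb⟩, hca', hcb'⟩ := hc
  have hd0 : 0 ≤ d₁ := hd ▸ add_nonneg (le_max_right _ _) hc0
  have hab : a + b - 1 ≤ d₁ := hd ▸ le_add_of_le_of_nonneg (le_max_left _ _) hc0
  have hda : d₁ ≤ a := by grind
  have hdb : d₁ ≤ b := by grind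
  rw [spearmanRho, and_self, lowerC_eq_pointLowerBound, ← hd,
    integral_pointLowerBound hd0 hda hdb hab]
  ring
end

section
/- Let (a,b) ∈ [0,1]² and let c satisfy 0 ≤ c ≤ min{a,b,1−a,1−b}, and set d₂ = min{a,b} − c. Then 4∫₀¹ C̄^{(a,b)}_c(u,u) du − 1 = 1 − 4(a−d₂)(b−d₂). -/
open Set MeasureTheory intervalIntegral

/-!
On the diagonal, `upperC a b c` falls short of the Fréchet–Hoeffding bound `u` by a trapezoidal bump
supported on `[d, a + b - d]`, where `d = min a b - c`. The bump is the convolution of the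
indicators of two intervals of lengths `a - d` and `b - d`, so its area is `(a - d) * (b - d)`.
-/

lemma posPart_add_posPart {α : Type*} [Lattice α] [AddCommGroup α] [AddLeftMono α] (x y : α) :
    x⁺ + y⁺ = (0 ⊔ x) ⊔ (y ⊔ (x + y)) := by
  simp only [posPart_def, add_sup, sup_add, zero_add, add_zero]
  ac_rfl

lemma integral_zero_posPart (x : ℝ) : ∫ t in (0 : ℝ)..x, t⁺ = x⁺ ^ 2 / 2 := by
  rcases le_total 0 x with hx | hx
  · have h_eq : EqOn (fun t : ℝ => t⁺) id (uIcc 0 x) := fun t ht =>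
      posPart_of_nonneg (uIcc_of_le hx ▸ ht).1
    simp [integral_congr h_eq, posPart_of_nonneg hx]
  · have h_eq : EqOn (fun t : ℝ => t⁺) 0 (uIcc 0 x) := fun t ht =>
      posPart_of_nonpos (uIcc_of_ge hx ▸ ht).2
    simp [integral_congr h_eq, posPart_of_nonpos hx]

lemma integral_posPart_sub (p q r : ℝ) :
    ∫ x in p..q, (x - r)⁺ = ((q - r)⁺ ^ 2 - (p - r)⁺ ^ 2) / 2 := by
  have h_int (x : ℝ) : IntervalIntegrable (fun t : ℝ => t⁺) volume 0 x :=
    continuous_posPart.intervalIntegrable 0 x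
  rw [integral_comp_sub_right (fun x => x⁺), ← integral_interval_sub_left (h_int _) (h_int _),
    integral_zero_posPart, integral_zero_posPart, sub_div]

/-- The convolution of the indicators of `[0, s]` and `[0, t]`, for `0 ≤ s` and `0 ≤ t`: it rises
with slope `1` from `0` to `min s t`, stays constant up to `max s t` and falls with slope `-1` to
`0` at `s + t`. It is encoded through the positive parts carrying its four changes of slope. -/
noncomputable def trapezoid (s t x : ℝ) : ℝ :=
  x⁺ - (x - s)⁺ - (x - t)⁺ + (x - (s + t))⁺

lemma continuous_trapezoid (s t : ℝ) : Continuous (trapezoid s t) := by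
  have h_cont (r : ℝ) : Continuous fun x : ℝ => (x - r)⁺ :=
    continuous_posPart.comp (continuous_sub_right r)
  exact ((continuous_posPart.sub (h_cont s)).sub (h_cont t)).add (h_cont (s + t))

lemma trapezoid_eq_posPart {s t : ℝ} (hs : 0 ≤ s) (ht : 0 ≤ t) (x : ℝ) :
    trapezoid s t x = (x - ((x - s)⁺ + (x - t)⁺))⁺ := by
  simp only [trapezoid, posPart_def]
  grind

lemma integral_trapezoid {p q s t : ℝ} (hp : p ≤ 0) (hs : 0 ≤ s) (ht : 0 ≤ t) (hq : s + t ≤ q) :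
    ∫ x in p..q, trapezoid s t x = s * t := by
  have h_int (r : ℝ) : IntervalIntegrable (fun x : ℝ => (x - r)⁺) volume p q :=
    (continuous_posPart.comp (continuous_sub_right r)).intervalIntegrable p q
  have h_area {r : ℝ} (hr : 0 ≤ r) (hrq : r ≤ q) : ∫ x in p..q, (x - r)⁺ = (q - r) ^ 2 / 2 := by
    have hpr : p - r ≤ 0 := by linarith
    rw [integral_posPart_sub, posPart_of_nonneg (sub_nonneg.2 hrq), posPart_of_nonpos hpr]
    ring
  have h_split (x : ℝ) :
      trapezoid s t x = (x - 0)⁺ - (x - s)⁺ - (x - t)⁺ + (x - (s + t))⁺ := by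
    rw [trapezoid, sub_zero]
  simp only [h_split]
  rw [integral_add (((h_int 0).sub (h_int s)).sub (h_int t)) (h_int (s + t)),
    integral_sub ((h_int 0).sub (h_int s)) (h_int t), integral_sub (h_int 0) (h_int s),
    h_area le_rfl (by linarith), h_area hs (by linarith), h_area ht (by linarith),
    h_area (by linarith) hq]
  ring

lemma upperC_eq_min_posPart (a b c u v : ℝ) :
    upperC a b c u v = min (min u v) (min a b - c + ((u - b)⁺ + (v - a)⁺)) := by
  simp only [upperC, posPart_add_posPart, add_sup, add_zero]
  congr 3 <;> ring

lemma upperC_self {a b c : ℝ} (hc : 0 ≤ c) (u : ℝ) :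
    upperC a b c u u =
      u - trapezoid (a - (min a b - c)) (b - (min a b - c)) (u - (min a b - c)) := by
  have ha : 0 ≤ a - (min a b - c) := by linarith [min_le_left a b]
  have hb : 0 ≤ b - (min a b - c) := by linarith [min_le_right a b]
  rw [upperC_eq_min_posPart, min_self, inf_eq_sub_posPart_sub, trapezoid_eq_posPart ha hb,
    sub_sub_sub_cancel_right, sub_sub_sub_cancel_right, ← sub_sub, add_comm (u - b)⁺]

theorem Q_M_upperC (a b c d₂ : ℝ) (ha : a ∈ Set.Icc (0:ℝ) 1) (hb : b ∈ Set.Icc (0:ℝ) 1)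
    (hc0 : 0 ≤ c) (hc : c ≤ min (min a b) (min (1 - a) (1 - b)))
    (hd : d₂ = min a b - c) :
    4 * (∫ u in (0:ℝ)..1, upperC a b c u u) - 1 = 1 - 4 * (a - d₂) * (b - d₂) := by
  have hd_nonneg : 0 ≤ d₂ := hd ▸ sub_nonneg.2 (hc.trans (min_le_left _ _))
  have hda : d₂ ≤ a := by linarith [min_le_left a b]
  have hdb : d₂ ≤ b := by linarith [min_le_right a b]
  have h_end : a + b - d₂ ≤ 1 := by
    have hc_max : c ≤ 1 - max a b := min_sub_sub_left 1 a b ▸ hc.trans (min_le_right _ _)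
    linarith [min_add_max a b]
  have h_deficit : ∫ u in (0:ℝ)..1, trapezoid (a - d₂) (b - d₂) (u - d₂) =
      (a - d₂) * (b - d₂) := by
    rw [integral_comp_sub_right (trapezoid (a - d₂) (b - d₂))]
    exact integral_trapezoid (by linarith) (by linarith) (by linarith) (by linarith)
  have h_int : IntervalIntegrable (fun u => trapezoid (a - d₂) (b - d₂) (u - d₂)) volume 0 1 :=
    ((continuous_trapezoid _ _).comp (continuous_sub_right d₂)).intervalIntegrable 0 1
  simp only [upperC_self hc0, ← hd]
  rw [integral_sub intervalIntegrable_id h_int, integral_id, h_deficit]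
  ring
end

section
/- Let m ∈ [0,1/3]. For every (a,b) ∈ Δ_m, Spearman's rho of the upper bound copula satisfies ρ(C̄^{(a,b)}_m) ≤ 1 − 36m³, and equality holds at (a,b) = (m, 2m), i.e. ρ(C̄^{(m,2m)}_m) = 1 − 36m³. -/
open Set MeasureTheory intervalIntegral

/-!
The upper bound copula is a shuffle of the Fréchet bound `min u v`: its mass lies on the graph of
the map `T` of `[0, 1]` that exchanges two adjacent intervals of lengths `p = |b - a| + c` and
`q = c`, the longer one first when `a ≤ b` and last when `b ≤ a`. Integrating the distribution
functions of the four segments of this graph gives `ρ = 1 - 6 p q (p + q)`, in agreement with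
`ρ = 1 - 6 ∫ (T u - u)² du`: points of either interval move by the length of the other. For `c = m`
and `|b - a| ≥ m` one has `p ≥ 2 m`, hence `p q (p + q) ≥ 6 m³`, with equality when `|b - a| = m`.
-/

/-- The profile that is `0` up to `x`, then climbs with slope one to the height `ℓ` and stays there:
the distribution function of Lebesgue measure on `[x, x + ℓ]`. -/
noncomputable def ramp (x ℓ u : ℝ) : ℝ := min ℓ (max (u - x) 0)

/-- The distribution function of the mass `ℓ` spread uniformly over the segment from `(x, y)` to
`(x + ℓ, y + ℓ)`. Shuffles of the Fréchet upper bound `min u v` are sums of such functions. -/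
noncomputable def diagSegment (x y ℓ u v : ℝ) : ℝ := min (ramp x ℓ u) (ramp y ℓ v)

section Ramp

variable {x ℓ : ℝ}

lemma continuous_ramp (x ℓ : ℝ) : Continuous (ramp x ℓ) := by
  unfold ramp
  fun_prop

lemma ramp_nonneg (hℓ : 0 ≤ ℓ) (u : ℝ) : 0 ≤ ramp x ℓ u :=
  le_min hℓ (le_max_right _ _)

lemma ramp_le_height (x ℓ u : ℝ) : ramp x ℓ u ≤ ℓ := min_le_left _ _

lemma ramp_eq_zero {u : ℝ} (hℓ : 0 ≤ ℓ) (hu : u ≤ x) : ramp x ℓ u = 0 := by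
  rw [ramp, max_eq_right (sub_nonpos.2 hu), min_eq_right hℓ]

lemma ramp_eq_sub {u : ℝ} (hxu : x ≤ u) (hu : u ≤ x + ℓ) : ramp x ℓ u = u - x := by
  rw [ramp, max_eq_left (sub_nonneg.2 hxu), min_eq_right (by linarith)]

lemma ramp_eq_height {u : ℝ} (hu : x + ℓ ≤ u) : ramp x ℓ u = ℓ :=
  min_eq_left (le_max_of_le_left (by linarith))

lemma integral_ramp_pow {α β : ℝ} (hℓ : 0 ≤ ℓ) (hα : α ≤ x) (hβ : x + ℓ ≤ β) (n : ℕ) :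
    ∫ u in α..β, ramp x ℓ u ^ (n + 1) =
      ℓ ^ (n + 2) / (n + 2) + ℓ ^ (n + 1) * (β - x - ℓ) := by
  have hint (s t : ℝ) : IntervalIntegrable (fun u => ramp x ℓ u ^ (n + 1)) volume s t :=
    ((continuous_ramp x ℓ).pow _).intervalIntegrable s t
  have hzero : ∫ u in α..x, ramp x ℓ u ^ (n + 1) = 0 := by
    refine integral_zero_ae (.of_forall fun u hu => ?_)
    rw [uIoc_of_le hα] at hu
    rw [ramp_eq_zero hℓ hu.2, zero_pow n.succ_ne_zero]
  have hslope : ∫ u in x..x + ℓ, ramp x ℓ u ^ (n + 1) = ℓ ^ (n + 2) / (n + 2) := by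
    have hcongr : EqOn (fun u => ramp x ℓ u ^ (n + 1)) (fun u => (u - x) ^ (n + 1))
        (uIcc x (x + ℓ)) := fun u hu => by
      rw [uIcc_of_le (by linarith)] at hu
      simp only [ramp_eq_sub hu.1 hu.2]
    rw [integral_congr hcongr, integral_comp_sub_right (fun s => s ^ (n + 1)), integral_pow]
    push_cast
    ring
  have hconst : ∫ u in (x + ℓ)..β, ramp x ℓ u ^ (n + 1) = ℓ ^ (n + 1) * (β - x - ℓ) := by
    have hcongr : EqOn (fun u => ramp x ℓ u ^ (n + 1)) (fun _ => ℓ ^ (n + 1))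
        (uIcc (x + ℓ) β) := fun u hu => by
      rw [uIcc_of_le hβ] at hu
      simp only [ramp_eq_height hu.1]
    rw [integral_congr hcongr, intervalIntegral.integral_const, smul_eq_mul]
    ring
  rw [← integral_add_adjacent_intervals (hint α x) (hint x β),
    ← integral_add_adjacent_intervals (hint x (x + ℓ)) (hint (x + ℓ) β), hzero, hslope, hconst]
  ring

end Ramp

section DiagSegment

variable {x y ℓ : ℝ}

lemma continuous_diagSegment (x y ℓ : ℝ) : Continuous (Function.uncurry (diagSegment x y ℓ)) :=
  ((continuous_ramp x ℓ).comp continuous_fst).min ((continuous_ramp y ℓ).comp continuous_snd)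

lemma diagSegment_swap (x y ℓ u v : ℝ) : diagSegment x y ℓ v u = diagSegment y x ℓ u v :=
  min_comm _ _

lemma diagSegment_eq_ramp (x y ℓ u v : ℝ) :
    diagSegment x y ℓ u v = ramp y (ramp x ℓ u) v := by
  calc diagSegment x y ℓ u v = min (ramp x ℓ u) (min ℓ (max (v - y) 0)) := rfl
    _ = min (min (ramp x ℓ u) ℓ) (max (v - y) 0) := (min_assoc _ _ _).symm
    _ = ramp y (ramp x ℓ u) v := by rw [min_eq_left (ramp_le_height x ℓ u)]; rfl

lemma integral_diagSegment_right {γ δ : ℝ} (hℓ : 0 ≤ ℓ) (hγ : γ ≤ y) (hδ : y + ℓ ≤ δ) (u : ℝ) :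
    ∫ v in γ..δ, diagSegment x y ℓ u v =
      (δ - y) * ramp x ℓ u - 1 / 2 * ramp x ℓ u ^ 2 := by
  have hheight : y + ramp x ℓ u ≤ δ := by linarith [ramp_le_height x ℓ u]
  have hramp : ∫ v in γ..δ, ramp y (ramp x ℓ u) v =
      ramp x ℓ u ^ 2 / 2 + ramp x ℓ u * (δ - y - ramp x ℓ u) := by
    simpa using integral_ramp_pow (ramp_nonneg hℓ u) hγ hheight 0
  simp only [diagSegment_eq_ramp, hramp]
  ring

/- The right-hand side is `∫ s in 0..ℓ, (β - x - s) * (δ - y - s)`: the mass at `(x + s, y + s)`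
counts for every `(u, v)` above and to the right of it. -/
lemma integral_integral_diagSegment {α β γ δ : ℝ} (hℓ : 0 ≤ ℓ) (hα : α ≤ x) (hβ : x + ℓ ≤ β)
    (hγ : γ ≤ y) (hδ : y + ℓ ≤ δ) :
    ∫ u in α..β, ∫ v in γ..δ, diagSegment x y ℓ u v =
      (β - x) * (δ - y) * ℓ - ((β - x) + (δ - y)) * ℓ ^ 2 / 2 + ℓ ^ 3 / 3 := by
  have hint : IntervalIntegrable (ramp x ℓ) volume α β :=
    (continuous_ramp x ℓ).intervalIntegrable α β
  have hint_sq : IntervalIntegrable (fun u => ramp x ℓ u ^ 2) volume α β :=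
    ((continuous_ramp x ℓ).pow 2).intervalIntegrable α β
  have hlinear : ∫ u in α..β, ramp x ℓ u = ℓ ^ 2 / 2 + ℓ * (β - x - ℓ) := by
    simpa using integral_ramp_pow hℓ hα hβ 0
  have hsquare : ∫ u in α..β, ramp x ℓ u ^ 2 = ℓ ^ 3 / 3 + ℓ ^ 2 * (β - x - ℓ) := by
    convert integral_ramp_pow hℓ hα hβ 1 using 3
    norm_num
  simp only [integral_diagSegment_right hℓ hγ hδ]
  rw [intervalIntegral.integral_sub (hint.const_mul _) (hint_sq.const_mul _),
    intervalIntegral.integral_const_mul, intervalIntegral.integral_const_mul, hlinear, hsquare]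
  ring

end DiagSegment

lemma intervalIntegral_intervalIntegral_add {F G : ℝ → ℝ → ℝ} (hF : Continuous (Function.uncurry F))
    (hG : Continuous (Function.uncurry G)) (p q r s : ℝ) :
    ∫ u in p..q, ∫ v in r..s, (F u v + G u v) =
      (∫ u in p..q, ∫ v in r..s, F u v) + ∫ u in p..q, ∫ v in r..s, G u v := by
  have hslice {H : ℝ → ℝ → ℝ} (hH : Continuous (Function.uncurry H)) (u : ℝ) :
      IntervalIntegrable (H u) volume r s :=
    (hH.comp (Continuous.prodMk_right u)).intervalIntegrable r s
  have houter {H : ℝ → ℝ → ℝ} (hH : Continuous (Function.uncurry H)) :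
      IntervalIntegrable (fun u => ∫ v in r..s, H u v) volume p q :=
    (continuous_parametric_intervalIntegral_of_continuous' hH r s).intervalIntegrable p q
  simp only [intervalIntegral.integral_add (hslice hF _) (hslice hG _)]
  exact intervalIntegral.integral_add (houter hF) (houter hG)

/-- The shuffle of `min u v` that moves the block `[d, d + p]` up by `q` and the adjacent block
`[d + p, d + p + q]` down by `p`, leaving the rest of the diagonal in place. -/
noncomputable def blockSwap (d p q u v : ℝ) : ℝ :=
  diagSegment 0 0 d u v + diagSegment d (d + q) p u v + diagSegment (d + p) d q u v +
    diagSegment (d + p + q) (d + p + q) (1 - (d + p + q)) u v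

section BlockSwap

variable {d p q : ℝ}

lemma blockSwap_swap (d p q u v : ℝ) : blockSwap d p q v u = blockSwap d q p u v := by
  simp only [blockSwap, diagSegment_swap _ _ _ u v, add_right_comm d p q]
  ring

lemma spearmanRho_blockSwap (hd : 0 ≤ d) (hp : 0 ≤ p) (hq : 0 ≤ q) (h : d + p + q ≤ 1) :
    spearmanRho (blockSwap d p q) = 1 - 6 * (p * q * (p + q)) := by
  have hseg := continuous_diagSegment
  have hadd {F G : ℝ → ℝ → ℝ} (hF : Continuous (Function.uncurry F))
      (hG : Continuous (Function.uncurry G)) :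
      Continuous (Function.uncurry fun u v => F u v + G u v) := hF.add hG
  unfold spearmanRho blockSwap
  rw [intervalIntegral_intervalIntegral_add
      (hadd (hadd (hseg _ _ _) (hseg _ _ _)) (hseg _ _ _)) (hseg _ _ _),
    intervalIntegral_intervalIntegral_add (hadd (hseg _ _ _) (hseg _ _ _)) (hseg _ _ _),
    intervalIntegral_intervalIntegral_add (hseg _ _ _) (hseg _ _ _)]
  repeat rw [integral_integral_diagSegment (by linarith) (by linarith) (by linarith) (by linarith)
    (by linarith)]
  ring

end BlockSwap

lemma spearmanRho_congr {C D : ℝ → ℝ → ℝ}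
    (h : ∀ u ∈ Icc (0 : ℝ) 1, ∀ v ∈ Icc (0 : ℝ) 1, C u v = D u v) :
    spearmanRho C = spearmanRho D := by
  rw [← uIcc_of_le zero_le_one] at h
  unfold spearmanRho
  rw [integral_congr fun u hu => integral_congr fun v hv => h u hu v hv]

section UpperC

variable {a b c : ℝ}

lemma upperC_swap (a b c u v : ℝ) : upperC a b c v u = upperC b a c u v := by
  simp only [upperC, min_comm v u, min_comm a b, max_max_max_comm]
  ring_nf

lemma upperC_eq_of_le (hab : a ≤ b) (c u v : ℝ) :
    upperC a b c u v = min (min u v) (a - c + max (u - b) 0 + max (v - a) 0) := by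
  rw [upperC, min_eq_left hab]
  grind

lemma upperC_eq_blockSwap {u v : ℝ} (hc : 0 ≤ c) (hca : c ≤ a) (hab : a ≤ b) (hbc : b + c ≤ 1)
    (hu : u ∈ Icc (0 : ℝ) 1) (hv : v ∈ Icc (0 : ℝ) 1) :
    upperC a b c u v = blockSwap (a - c) (b - a + c) c u v := by
  obtain ⟨hu0, hu1⟩ := hu
  obtain ⟨_, _⟩ := hv
  have hshift : a - c + c = a := by ring
  have hmid : a - c + (b - a + c) = b := by ring
  have hlong : 0 ≤ b - a + c := by linarith
  have hlast : 0 ≤ 1 - (b + c) := by linarith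
  rw [upperC_eq_of_le hab]
  simp only [blockSwap, hshift, hmid, diagSegment_eq_ramp]
  -- Once `u` is located, every slope in `u` is resolved and a one-variable identity in `v` remains.
  rcases le_total u (a - c) with hu₁ | hu₁
  · rw [ramp_eq_sub hu0 (by linarith), ramp_eq_zero hlong hu₁,
      ramp_eq_zero (u := u) hc (by linarith), ramp_eq_zero (u := u) hlast (by linarith)]
    unfold ramp
    grind
  rw [ramp_eq_height (u := u) (x := 0) (by linarith)]
  rcases le_total u b with hu₂ | hu₂
  · rw [ramp_eq_sub hu₁ (by linarith), ramp_eq_zero hc hu₂,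
      ramp_eq_zero (u := u) hlast (by linarith)]
    unfold ramp
    grind
  rw [ramp_eq_height (u := u) (x := a - c) (by linarith)]
  rcases le_total u (b + c) with hu₃ | hu₃
  · rw [ramp_eq_sub hu₂ hu₃, ramp_eq_zero hlast hu₃]
    unfold ramp
    grind
  · rw [ramp_eq_height hu₃, ramp_eq_sub hu₃ (by linarith)]
    unfold ramp
    grind

theorem spearmanRho_upperC (hc : 0 ≤ c) (hca : c ≤ a) (hcb : c ≤ b) (hac : a + c ≤ 1)
    (hbc : b + c ≤ 1) :
    spearmanRho (upperC a b c) = 1 - 6 * (c * (|b - a| + c) * (|b - a| + 2 * c)) := by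
  rcases le_total a b with hab | hba
  · have hswap : spearmanRho (upperC a b c) = spearmanRho (blockSwap (a - c) (b - a + c) c) :=
      spearmanRho_congr fun u hu v hv => upperC_eq_blockSwap hc hca hab hbc hu hv
    rw [hswap, spearmanRho_blockSwap (by linarith) (by linarith) hc (by linarith),
      abs_of_nonneg (sub_nonneg.2 hab)]
    ring
  · have hswap : spearmanRho (upperC a b c) = spearmanRho (blockSwap (b - c) c (a - b + c)) :=
      spearmanRho_congr fun u hu v hv => by
        rw [← upperC_swap, upperC_eq_blockSwap hc hcb hba hac hv hu, blockSwap_swap]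
    rw [hswap, spearmanRho_blockSwap (by linarith) hc (by linarith) (by linarith),
      abs_of_nonpos (sub_nonpos.2 hba)]
    ring

end UpperC

theorem rho_upperC_max_general {m : ℝ} (hm : m ∈ Icc (0 : ℝ) (1 / 3)) :
    (∀ a b : ℝ, m ≤ a → m ≤ b → a + m ≤ 1 → b + m ≤ 1 → m ≤ |b - a| →
      spearmanRho (upperC a b m) ≤ 1 - 36 * m ^ 3) ∧
    spearmanRho (upperC m (2 * m) m) = 1 - 36 * m ^ 3 := by
  obtain ⟨hm0, hm1⟩ := hm
  constructor
  · intro a b ha hb ham hbm hdist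
    have hcube : 6 * m ^ 3 ≤ m * (|b - a| + m) * (|b - a| + 2 * m) := by
      calc 6 * m ^ 3 = m * (m + m) * (m + 2 * m) := by ring
        _ ≤ m * (|b - a| + m) * (|b - a| + 2 * m) := by gcongr
    rw [spearmanRho_upperC hm0 ha hb ham hbm]
    linarith
  · have hdist : |2 * m - m| = m := by rw [two_mul, add_sub_cancel_right, abs_of_nonneg hm0]
    rw [spearmanRho_upperC hm0 le_rfl (by linarith) (by linarith) (by linarith), hdist]
    ring

theorem rho_upperC_max (m : ℝ) (hm : m ∈ Set.Icc (0:ℝ) (1/3)) :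
    (∀ a b : ℝ, a ∈ Set.Icc (0:ℝ) 1 → b ∈ Set.Icc (0:ℝ) 1 →
      m ≤ a → m ≤ b - a → a + b ≤ 1 →
      spearmanRho (upperC a b m) ≤ 1 - 36 * m^3) ∧
    spearmanRho (upperC m (2 * m) m) = 1 - 36 * m^3 := by
  refine (rho_upperC_max_general hm).imp_left fun hle a b _ _ ha hab hsum => ?_
  have hm0 := hm.1
  exact hle a b ha (by linarith) (by linarith) (by linarith) (hab.trans (le_abs_self _))
end

section
/- Let C be a copula with attained asymmetry m. Then 12m³ − 1 ≤ ρ(C) ≤ 1 − 36m³, where ρ(C) is Spearman's rho of C. In particular, if m = 1/3 then ρ(C) ∈ [−5/9, −1/3]. -/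
open Set MeasureTheory intervalIntegral

/-!
Fix a point `(x, y)` and write `c = C x y`. Monotonicity and the 1-Lipschitz property bound each
section `C u ·` in terms of its value at `y`, and `C u y` in terms of `c`. Integrating both bounds
pushes `ρ(C)` below its maximum `1` by at least `6 p q (p + q)`, where `p = x - c` and `q = y - c`.
Since reflecting the second variable turns `ρ` into `-ρ`, there is a matching lower bound.

If `C a b - C b a = d ≥ 0`, then at `(b, a)` both `p` and `q` are at least `d`, and they differ by
`|a - b| ≥ d`, so the larger one is at least `2 d`: this gives `36 d ^ 3`. For the lower bound at
`(a, b)` both factors are only known to be at least `d`, which gives `12 d ^ 3`.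
-/

lemma integral_min_const {α s β : ℝ} (hαs : α ≤ s) (hsβ : s ≤ β) :
    ∫ t in α..β, min t s = s * β - (s ^ 2 + α ^ 2) / 2 := by
  have hint (p q : ℝ) : IntervalIntegrable (fun t => min t s) volume p q :=
    Continuous.intervalIntegrable (by fun_prop) p q
  have hbelow : ∫ t in α..s, min t s = (s ^ 2 - α ^ 2) / 2 := by
    rw [← integral_id]
    refine integral_congr fun t ht => min_eq_left ?_
    exact (uIcc_of_le hαs ▸ ht).2
  have habove : ∫ t in s..β, min t s = (β - s) * s := by
    rw [← smul_eq_mul, ← intervalIntegral.integral_const]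
    refine integral_congr fun t ht => min_eq_right ?_
    exact (uIcc_of_le hsβ ▸ ht).1
  rw [← integral_add_adjacent_intervals (hint α s) (hint s β), hbelow, habove]
  ring

lemma mul_mul_add_le_mul_mul_add {p₁ p₂ q₁ q₂ : ℝ} (hp₁ : 0 ≤ p₁) (hq₁ : 0 ≤ q₁)
    (hp : p₁ ≤ p₂) (hq : q₁ ≤ q₂) : p₁ * q₁ * (p₁ + q₁) ≤ p₂ * q₂ * (p₂ + q₂) :=
  mul_le_mul (mul_le_mul hp hq hq₁ (hp₁.trans hp)) (add_le_add hp hq) (add_nonneg hp₁ hq₁)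
    (mul_nonneg (hp₁.trans hp) (hq₁.trans hq))

lemma six_mul_cube_le_of_le_abs_sub {d p q : ℝ} (hd : 0 ≤ d) (hp : d ≤ p) (hq : d ≤ q)
    (hpq : d ≤ |p - q|) : 6 * d ^ 3 ≤ p * q * (p + q) := by
  wlog hle : q ≤ p generalizing p q
  · linarith [this hq hp (abs_sub_comm p q ▸ hpq) (le_of_not_ge hle)]
  rw [abs_of_nonneg (sub_nonneg.2 hle)] at hpq
  calc 6 * d ^ 3 = 2 * d * d * (2 * d + d) := by ring
    _ ≤ p * q * (p + q) :=
        mul_mul_add_le_mul_mul_add (by linarith) hd (by linarith) hq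

/-- The reflection of `C` in its second variable: if `C` is the distribution function of `(U, V)`,
this is that of `(U, 1 - V)`. It exchanges upper and lower bounds for Spearman's rho. -/
def reflectSnd (C : ℝ → ℝ → ℝ) : ℝ → ℝ → ℝ := fun u v => u - C u (1 - v)

namespace IsCopula

variable {C : ℝ → ℝ → ℝ} {u u₁ u₂ v v₁ v₂ a b x y : ℝ}

lemma zero_right (hC : IsCopula C) (hu : u ∈ Icc (0 : ℝ) 1) : C u 0 = 0 := (hC.1 u hu).1

lemma zero_left (hC : IsCopula C) (hv : v ∈ Icc (0 : ℝ) 1) : C 0 v = 0 := (hC.1 v hv).2.1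

lemma one_right (hC : IsCopula C) (hu : u ∈ Icc (0 : ℝ) 1) : C u 1 = u := (hC.1 u hu).2.2.1

lemma one_left (hC : IsCopula C) (hv : v ∈ Icc (0 : ℝ) 1) : C 1 v = v := (hC.1 v hv).2.2.2

protected lemma swap (hC : IsCopula C) : IsCopula fun u v => C v u :=
  ⟨fun _ hu => ⟨hC.zero_left hu, hC.zero_right hu, hC.one_left hu, hC.one_right hu⟩,
    fun u₁ u₂ v₁ v₂ hu₁ hu hu₂ hv₁ hv hv₂ => by
      linarith [hC.2 v₁ v₂ u₁ u₂ hv₁ hv hv₂ hu₁ hu hu₂]⟩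

protected lemma reflectSnd (hC : IsCopula C) : IsCopula (reflectSnd C) := by
  refine ⟨fun u hu => ?_, fun u₁ u₂ v₁ v₂ hu₁ hu hu₂ hv₁ hv hv₂ => ?_⟩
  · have hu' := Icc.mem_iff_one_sub_mem.1 hu
    simp [reflectSnd, hC.zero_right hu, hC.one_right hu, hC.zero_left hu', hC.one_left hu']
  · have h := hC.2 u₁ u₂ (1 - v₂) (1 - v₁) hu₁ hu hu₂
      (by linarith) (by linarith) (by linarith)
    simp only [reflectSnd]
    linarith

lemma mono_left (hC : IsCopula C) (hv : v ∈ Icc (0 : ℝ) 1) (hu₁ : 0 ≤ u₁) (hu : u₁ ≤ u₂)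
    (hu₂ : u₂ ≤ 1) : C u₁ v ≤ C u₂ v := by
  linarith [hC.2 u₁ u₂ 0 v hu₁ hu hu₂ le_rfl hv.1 hv.2,
    hC.zero_right ⟨hu₁, hu.trans hu₂⟩, hC.zero_right ⟨hu₁.trans hu, hu₂⟩]

lemma mono_right (hC : IsCopula C) (hu : u ∈ Icc (0 : ℝ) 1) (hv₁ : 0 ≤ v₁) (hv : v₁ ≤ v₂)
    (hv₂ : v₂ ≤ 1) : C u v₁ ≤ C u v₂ :=
  hC.swap.mono_left hu hv₁ hv hv₂

lemma le_add_sub_left (hC : IsCopula C) (hv : v ∈ Icc (0 : ℝ) 1) (hu₁ : 0 ≤ u₁) (hu : u₁ ≤ u₂)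
    (hu₂ : u₂ ≤ 1) : C u₂ v ≤ C u₁ v + (u₂ - u₁) := by
  linarith [hC.2 u₁ u₂ v 1 hu₁ hu hu₂ hv.1 hv.2 le_rfl,
    hC.one_right ⟨hu₁, hu.trans hu₂⟩, hC.one_right ⟨hu₁.trans hu, hu₂⟩]

lemma le_add_sub_right (hC : IsCopula C) (hu : u ∈ Icc (0 : ℝ) 1) (hv₁ : 0 ≤ v₁) (hv : v₁ ≤ v₂)
    (hv₂ : v₂ ≤ 1) : C u v₂ ≤ C u v₁ + (v₂ - v₁) :=
  hC.swap.le_add_sub_left hu hv₁ hv hv₂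

lemma nonneg (hC : IsCopula C) (hu : u ∈ Icc (0 : ℝ) 1) (hv : v ∈ Icc (0 : ℝ) 1) : 0 ≤ C u v :=
  (hC.zero_right hu).symm.trans_le (hC.mono_right hu le_rfl hv.1 hv.2)

lemma le_left (hC : IsCopula C) (hu : u ∈ Icc (0 : ℝ) 1) (hv : v ∈ Icc (0 : ℝ) 1) : C u v ≤ u :=
  (hC.mono_right hu hv.1 hv.2 le_rfl).trans_eq (hC.one_right hu)

lemma le_right (hC : IsCopula C) (hu : u ∈ Icc (0 : ℝ) 1) (hv : v ∈ Icc (0 : ℝ) 1) : C u v ≤ v :=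
  hC.swap.le_left hv hu

lemma add_sub_one_le (hC : IsCopula C) (hu : u ∈ Icc (0 : ℝ) 1) (hv : v ∈ Icc (0 : ℝ) 1) :
    u + v - 1 ≤ C u v := by
  linarith [hC.le_add_sub_right hu hv.1 hv.2 le_rfl, hC.one_right hu]

lemma sub_swap_le_abs_sub (hC : IsCopula C) (ha : a ∈ Icc (0 : ℝ) 1) (hb : b ∈ Icc (0 : ℝ) 1) :
    C a b - C b a ≤ |a - b| := by
  rcases le_total a b with h | h
  · rw [abs_sub_comm, abs_of_nonneg (sub_nonneg.2 h)]
    linarith [hC.le_add_sub_right ha ha.1 h hb.2, hC.mono_left ha ha.1 h hb.2]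
  · rw [abs_of_nonneg (sub_nonneg.2 h)]
    linarith [hC.le_add_sub_left hb hb.1 h ha.2, hC.mono_right hb hb.1 h ha.2]

lemma continuousOn_left (hC : IsCopula C) (hv : v ∈ Icc (0 : ℝ) 1) :
    ContinuousOn (fun u => C u v) (Icc 0 1) := by
  refine (LipschitzOnWith.of_le_add fun u₁ hu₁ u₂ hu₂ => ?_).continuousOn
  rcases le_total u₁ u₂ with h | h
  · exact (hC.mono_left hv hu₁.1 h hu₂.2).trans (le_add_of_nonneg_right dist_nonneg)
  · rw [Real.dist_eq, abs_of_nonneg (sub_nonneg.2 h)]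
    exact hC.le_add_sub_left hv hu₂.1 h hu₁.2

lemma intervalIntegrable_right (hC : IsCopula C) (hu : u ∈ Icc (0 : ℝ) 1)
    (hv₁ : v₁ ∈ Icc (0 : ℝ) 1) (hv₂ : v₂ ∈ Icc (0 : ℝ) 1) :
    IntervalIntegrable (C u) volume v₁ v₂ :=
  ((hC.swap.continuousOn_left hu).mono (uIcc_subset_Icc hv₁ hv₂)).intervalIntegrable

lemma intervalIntegrable_integral (hC : IsCopula C) :
    IntervalIntegrable (fun u => ∫ v in (0 : ℝ)..1, C u v) volume 0 1 := by
  apply MonotoneOn.intervalIntegrable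
  rw [uIcc_of_le zero_le_one]
  intro u₁ hu₁ u₂ hu₂ hu
  have hint {w : ℝ} (hw : w ∈ Icc (0 : ℝ) 1) :=
    hC.intervalIntegrable_right hw unitInterval.zero_mem unitInterval.one_mem
  exact integral_mono_on zero_le_one (hint hu₁) (hint hu₂)
    fun v hv => hC.mono_left hv hu₁.1 hu hu₂.2

lemma integral_right_le (hC : IsCopula C) (hu : u ∈ Icc (0 : ℝ) 1) (hy : y ∈ Icc (0 : ℝ) 1) :
    ∫ v in (0 : ℝ)..1, C u v ≤ u - u ^ 2 / 2 - (u - C u y) * (y - C u y) := by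
  have hbelow : ∫ v in (0 : ℝ)..y, C u v ≤ C u y * y - C u y ^ 2 / 2 := by
    calc ∫ v in (0 : ℝ)..y, C u v ≤ ∫ v in (0 : ℝ)..y, min v (C u y) := by
          refine integral_mono_on hy.1
            (hC.intervalIntegrable_right hu unitInterval.zero_mem hy)
            (Continuous.intervalIntegrable (by fun_prop) _ _) fun v hv => le_min ?_ ?_
          · exact hC.le_right hu ⟨hv.1, hv.2.trans hy.2⟩
          · exact hC.mono_right hu hv.1 hv.2 hy.2
      _ = C u y * y - C u y ^ 2 / 2 := by
          rw [integral_min_const (hC.nonneg hu hy) (hC.le_right hu hy)]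
          ring
  have habove : ∫ v in y..1, C u v ≤ u * (1 - (y - C u y)) - (u ^ 2 + C u y ^ 2) / 2 := by
    calc ∫ v in y..1, C u v ≤ ∫ v in y..1, min (v - (y - C u y)) u := by
          refine integral_mono_on hy.2
            (hC.intervalIntegrable_right hu hy unitInterval.one_mem)
            (Continuous.intervalIntegrable (by fun_prop) _ _) fun v hv => le_min ?_ ?_
          · linarith [hC.le_add_sub_right hu hy.1 hv.1 hv.2]
          · exact hC.le_left hu ⟨hy.1.trans hv.1, hv.2⟩
      _ = u * (1 - (y - C u y)) - (u ^ 2 + C u y ^ 2) / 2 := by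
          rw [integral_comp_sub_right (fun t => min t u), sub_sub_cancel,
            integral_min_const (hC.le_left hu hy) (by linarith [hC.add_sub_one_le hu hy])]
  rw [← integral_add_adjacent_intervals
    (hC.intervalIntegrable_right hu unitInterval.zero_mem hy)
    (hC.intervalIntegrable_right hu hy unitInterval.one_mem)]
  linarith

lemma intervalIntegrable_sub_mul_sub (hC : IsCopula C) (hy : y ∈ Icc (0 : ℝ) 1)
    (hu₁ : u₁ ∈ Icc (0 : ℝ) 1) (hu₂ : u₂ ∈ Icc (0 : ℝ) 1) :
    IntervalIntegrable (fun u => (u - C u y) * (y - C u y)) volume u₁ u₂ :=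
  (((continuousOn_id.sub (hC.continuousOn_left hy)).mul
    (continuousOn_const.sub (hC.continuousOn_left hy))).mono
      (uIcc_subset_Icc hu₁ hu₂)).intervalIntegrable

lemma integral_integral_le (hC : IsCopula C) (hy : y ∈ Icc (0 : ℝ) 1) :
    ∫ u in (0 : ℝ)..1, ∫ v in (0 : ℝ)..1, C u v ≤
      1 / 3 - ∫ u in (0 : ℝ)..1, (u - C u y) * (y - C u y) := by
  have hquad : IntervalIntegrable (fun u : ℝ => u - u ^ 2 / 2) volume 0 1 :=
    Continuous.intervalIntegrable (by fun_prop) 0 1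
  have hprod := hC.intervalIntegrable_sub_mul_sub hy
    unitInterval.zero_mem unitInterval.one_mem
  calc ∫ u in (0 : ℝ)..1, ∫ v in (0 : ℝ)..1, C u v
      ≤ ∫ u in (0 : ℝ)..1, (u - u ^ 2 / 2 - (u - C u y) * (y - C u y)) :=
        integral_mono_on zero_le_one hC.intervalIntegrable_integral (hquad.sub hprod)
          fun u hu => hC.integral_right_le hu hy
    _ = 1 / 3 - ∫ u in (0 : ℝ)..1, (u - C u y) * (y - C u y) := by
        rw [intervalIntegral.integral_sub hquad hprod, intervalIntegral.integral_sub
          (Continuous.intervalIntegrable (by fun_prop) 0 1)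
          (Continuous.intervalIntegrable (by fun_prop) 0 1)]
        norm_num

lemma le_integral_sub_mul_sub_left (hC : IsCopula C) (hx : x ∈ Icc (0 : ℝ) 1)
    (hy : y ∈ Icc (0 : ℝ) 1) :
    (x - C x y) ^ 2 / 2 * (y - C x y) ≤ ∫ u in C x y..x, (u - C u y) * (y - C u y) := by
  have hc := hC.nonneg hx hy
  have hcx := hC.le_left hx hy
  calc (x - C x y) ^ 2 / 2 * (y - C x y) = ∫ u in C x y..x, (u - C x y) * (y - C x y) := by
        rw [intervalIntegral.integral_mul_const, integral_comp_sub_right (fun t => t)]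
        simp
    _ ≤ ∫ u in C x y..x, (u - C u y) * (y - C u y) := by
        refine integral_mono_on hcx (Continuous.intervalIntegrable (by fun_prop) _ _)
          (hC.intervalIntegrable_sub_mul_sub hy ⟨hc, hcx.trans hx.2⟩ hx) fun u hu => ?_
        have hu₀ : 0 ≤ u := hc.trans hu.1
        have hle : C u y ≤ C x y := hC.mono_left hy hu₀ hu.2 hx.2
        exact mul_le_mul (sub_le_sub_left hle u) (sub_le_sub_left hle y)
          (sub_nonneg.2 (hC.le_right hx hy))
          (sub_nonneg.2 (hC.le_left ⟨hu₀, hu.2.trans hx.2⟩ hy))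

lemma le_integral_sub_mul_sub_right (hC : IsCopula C) (hx : x ∈ Icc (0 : ℝ) 1)
    (hy : y ∈ Icc (0 : ℝ) 1) :
    (x - C x y) * ((y - C x y) ^ 2 / 2) ≤
      ∫ u in x..x + (y - C x y), (u - C u y) * (y - C u y) := by
  have hcx := hC.le_left hx hy
  have hxz : x ≤ x + (y - C x y) := le_add_of_nonneg_right (sub_nonneg.2 (hC.le_right hx hy))
  have hz : x + (y - C x y) ≤ 1 := by linarith [hC.add_sub_one_le hx hy]
  calc (x - C x y) * ((y - C x y) ^ 2 / 2)
      = ∫ u in x..x + (y - C x y), (x - C x y) * (x + (y - C x y) - u) := by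
        rw [intervalIntegral.integral_const_mul, integral_comp_sub_left (fun t => t)]
        simp
    _ ≤ ∫ u in x..x + (y - C x y), (u - C u y) * (y - C u y) := by
        refine integral_mono_on hxz (Continuous.intervalIntegrable (by fun_prop) _ _)
          (hC.intervalIntegrable_sub_mul_sub hy hx ⟨hx.1.trans hxz, hz⟩) fun u hu => ?_
        have hle : C u y ≤ C x y + (u - x) := hC.le_add_sub_left hy hx.1 hu.1 (hu.2.trans hz)
        exact mul_le_mul (by linarith) (by linarith) (sub_nonneg.2 hu.2) (by linarith)

lemma le_integral_sub_mul_sub (hC : IsCopula C) (hx : x ∈ Icc (0 : ℝ) 1)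
    (hy : y ∈ Icc (0 : ℝ) 1) :
    (x - C x y) * (y - C x y) * ((x - C x y) + (y - C x y)) / 2 ≤
      ∫ u in (0 : ℝ)..1, (u - C u y) * (y - C u y) := by
  have hc := hC.nonneg hx hy
  have hcx := hC.le_left hx hy
  have hcy := hC.le_right hx hy
  have hz : x + (y - C x y) ≤ 1 := by linarith [hC.add_sub_one_le hx hy]
  calc (x - C x y) * (y - C x y) * ((x - C x y) + (y - C x y)) / 2
      = (x - C x y) ^ 2 / 2 * (y - C x y) + (x - C x y) * ((y - C x y) ^ 2 / 2) := by ring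
    _ ≤ ∫ u in C x y..x + (y - C x y), (u - C u y) * (y - C u y) := by
        rw [← integral_add_adjacent_intervals
          (hC.intervalIntegrable_sub_mul_sub hy ⟨hc, hcx.trans hx.2⟩ hx)
          (hC.intervalIntegrable_sub_mul_sub hy hx ⟨by linarith, hz⟩)]
        exact add_le_add (hC.le_integral_sub_mul_sub_left hx hy)
          (hC.le_integral_sub_mul_sub_right hx hy)
    _ ≤ ∫ u in (0 : ℝ)..1, (u - C u y) * (y - C u y) := by
        refine integral_mono_interval hc (by linarith) hz ?_
          (hC.intervalIntegrable_sub_mul_sub hy unitInterval.zero_mem unitInterval.one_mem)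
        refine ae_restrict_of_forall_mem measurableSet_Ioc fun u hu => ?_
        have hu' := Ioc_subset_Icc_self hu
        exact mul_nonneg (sub_nonneg.2 (hC.le_left hu' hy)) (sub_nonneg.2 (hC.le_right hu' hy))

lemma spearmanRho_le (hC : IsCopula C) (hx : x ∈ Icc (0 : ℝ) 1) (hy : y ∈ Icc (0 : ℝ) 1) :
    spearmanRho C ≤ 1 - 6 * ((x - C x y) * (y - C x y) * ((x - C x y) + (y - C x y))) := by
  unfold spearmanRho
  linarith [hC.integral_integral_le hy, hC.le_integral_sub_mul_sub hx hy]

lemma spearmanRho_reflectSnd (hC : IsCopula C) :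
    spearmanRho (reflectSnd C) = -spearmanRho C := by
  have hinner : EqOn (fun u => ∫ v in (0 : ℝ)..1, reflectSnd C u v)
      (fun u => u - ∫ v in (0 : ℝ)..1, C u v) (uIcc 0 1) := by
    intro u hu
    rw [uIcc_of_le zero_le_one] at hu
    have hint : IntervalIntegrable (fun v => C u (1 - v)) volume 0 1 := by
      simpa using ((hC.intervalIntegrable_right hu unitInterval.zero_mem
        unitInterval.one_mem).comp_sub_left 1).symm
    simp only [reflectSnd]
    rw [intervalIntegral.integral_sub intervalIntegrable_const hint,
      integral_comp_sub_left (C u) 1]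
    simp
  rw [spearmanRho, spearmanRho, integral_congr hinner, intervalIntegral.integral_sub
    (Continuous.intervalIntegrable (by fun_prop) _ _) hC.intervalIntegrable_integral, integral_id]
  ring

lemma le_spearmanRho (hC : IsCopula C) (hx : x ∈ Icc (0 : ℝ) 1) (hy : y ∈ Icc (0 : ℝ) 1) :
    6 * (C x y * (C x y - (x + y - 1)) * (C x y + (C x y - (x + y - 1)))) - 1 ≤
      spearmanRho C := by
  have h := hC.reflectSnd.spearmanRho_le hx (Icc.mem_iff_one_sub_mem.1 hy)
  rw [hC.spearmanRho_reflectSnd] at h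
  simp only [reflectSnd, sub_sub_cancel] at h
  linarith

lemma twelve_mul_cube_sub_one_le_spearmanRho (hC : IsCopula C) (ha : a ∈ Icc (0 : ℝ) 1)
    (hb : b ∈ Icc (0 : ℝ) 1) (hab : C b a ≤ C a b) :
    12 * (C a b - C b a) ^ 3 - 1 ≤ spearmanRho C := by
  have hd := sub_nonneg.2 hab
  have hp : C a b - C b a ≤ C a b := sub_le_self _ (hC.nonneg hb ha)
  have hq : C a b - C b a ≤ C a b - (a + b - 1) := by linarith [hC.add_sub_one_le hb ha]
  have hcube := mul_mul_add_le_mul_mul_add hd hd hp hq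
  linarith [hC.le_spearmanRho ha hb]

lemma spearmanRho_le_one_sub_mul_cube (hC : IsCopula C) (ha : a ∈ Icc (0 : ℝ) 1)
    (hb : b ∈ Icc (0 : ℝ) 1) (hab : C b a ≤ C a b) :
    spearmanRho C ≤ 1 - 36 * (C a b - C b a) ^ 3 := by
  have hcube := six_mul_cube_le_of_le_abs_sub (sub_nonneg.2 hab)
    (sub_le_sub_right (hC.le_right ha hb) (C b a)) (sub_le_sub_right (hC.le_left ha hb) (C b a))
    (by simpa [abs_sub_comm] using hC.sub_swap_le_abs_sub ha hb)
  linarith [hC.spearmanRho_le hb ha]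

end IsCopula

theorem rho_vs_asymmetry_general {C : ℝ → ℝ → ℝ} {a b m : ℝ} (hC : IsCopula C)
    (ha : a ∈ Icc (0 : ℝ) 1) (hb : b ∈ Icc (0 : ℝ) 1) (hm : m ≤ |C a b - C b a|) :
    12 * m ^ 3 - 1 ≤ spearmanRho C ∧ spearmanRho C ≤ 1 - 36 * m ^ 3 := by
  wlog hab : C b a ≤ C a b generalizing a b
  · exact this hb ha (abs_sub_comm (C a b) (C b a) ▸ hm) (le_of_not_ge hab)
  rw [abs_of_nonneg (sub_nonneg.2 hab)] at hm
  have hcube : m ^ 3 ≤ (C a b - C b a) ^ 3 := (Odd.strictMono_pow (by decide)).monotone hm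
  constructor
  · linarith [hC.twelve_mul_cube_sub_one_le_spearmanRho ha hb hab]
  · linarith [hC.spearmanRho_le_one_sub_mul_cube ha hb hab]

theorem rho_vs_asymmetry (C : ℝ → ℝ → ℝ) (m : ℝ) (hC : IsCopula C)
    (hbound : ∀ u ∈ Set.Icc (0:ℝ) 1, ∀ v ∈ Set.Icc (0:ℝ) 1, |C u v - C v u| ≤ m)
    (hattain : ∃ a ∈ Set.Icc (0:ℝ) 1, ∃ b ∈ Set.Icc (0:ℝ) 1, |C a b - C b a| = m) :
    (12 * m^3 - 1 ≤ spearmanRho C ∧ spearmanRho C ≤ 1 - 36 * m^3) ∧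
    (m = 1/3 → spearmanRho C ∈ Set.Icc (-(5:ℝ)/9) (-(1:ℝ)/3)) := by
  obtain ⟨a, ha, b, hb, hab⟩ := hattain
  have h := rho_vs_asymmetry_general hC ha hb hab.ge
  exact ⟨h, by rintro rfl; constructor <;> linarith [h.1, h.2]⟩
end
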